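/- Let a ∈ (0,1], let θ ∈ C¹((0,∞)) with r ↦ r θ'(r) bounded on (0,∞), and let R > 0. Define λ(R,θ') as the infimum, over all ψ ∈ C¹_c(U) whose restriction to U_R := (0,R) × (0,2πa) is not identically zero, of the quotient (∫_{U_R} [ |∂_rψ − θ'(r)∂_φψ|² + |∂_φψ|²/r² − (1/(4a²)) |ψ|²/r² ] r dr dφ) / (∫_{U_R} |ψ|² r dr dφ). Then for every continuously differentiable function u with compact support in Ω one has ∫_Ω |∇u(x)|² dx − (1/(4a²)) ∫_Ω |u(x)|²/|x|² dx ≥ λ(R,θ') ∫_{Ω_R} |u(x)|² dx, where Ω_R := ℒ(U_R). -/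

import Mathlib

open MeasureTheory Real Set

noncomputable section

/-- The half-strip `U = (0,∞) × (0,2πa)` of curvilinear coordinates `(r,φ)`. -/
def wedgeU (a : ℝ) : Set (ℝ × ℝ) := Ioi (0:ℝ) ×ˢ Ioo (0:ℝ) (2 * π * a)

/-- The truncated half-strip `U_R = (0,R) × (0,2πa)`. -/
def wedgeUR (a R : ℝ) : Set (ℝ × ℝ) := Ioo (0:ℝ) R ×ˢ Ioo (0:ℝ) (2 * π * a)

/-- The curvilinear coordinate map `ℒ(r,φ) = (r cos(φ+θ(r)), r sin(φ+θ(r)))`. -/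
def wedgeMap (θ : ℝ → ℝ) (p : ℝ × ℝ) : ℝ × ℝ :=
  (p.1 * Real.cos (p.2 + θ p.1), p.1 * Real.sin (p.2 + θ p.1))

/-- The Euclidean norm on `ℝ × ℝ`. -/
def enorm2 (x : ℝ × ℝ) : ℝ := Real.sqrt (x.1 ^ 2 + x.2 ^ 2)

/-- The lowest "Neumann" eigenvalue `λ(R,θ')`: the infimum over test functions
`ψ ∈ C¹_c(U)`, not identically zero on `U_R`, of the Hardy-type Rayleigh quotient on `U_R`. -/
def lamRayleigh (a R : ℝ) (θ' : ℝ → ℝ) : ℝ :=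
  sInf { q : ℝ | ∃ ψ : ℝ × ℝ → ℝ,
    ContDiff ℝ 1 ψ ∧ HasCompactSupport ψ ∧ tsupport ψ ⊆ wedgeU a ∧
    (¬ ∀ p ∈ wedgeUR a R, ψ p = 0) ∧
    q = (∫ p in wedgeUR a R,
          ((fderiv ℝ ψ p (1, 0) - θ' p.1 * fderiv ℝ ψ p (0, 1)) ^ 2
            + (fderiv ℝ ψ p (0, 1)) ^ 2 / p.1 ^ 2
            - (1 / (4 * a ^ 2)) * (ψ p) ^ 2 / p.1 ^ 2) * p.1)
        / (∫ p in wedgeUR a R, (ψ p) ^ 2 * p.1) }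

/-!
The map `ℒ` is the shear `(r, φ) ↦ (r, φ + θ r)` followed by polar coordinates, so it carries
`|∇u|² dx` to `(|∂_r ψ - θ' ∂_φ ψ|² + |∂_φ ψ|² / r²) r dr dφ` with `ψ = u ∘ ℒ`. For fixed `r` the
function `ψ(r, ·)` vanishes near the ends of an interval of length `2πa`, whose first Dirichlet
eigenvalue is `1 / (4a²)`; hence the angular part of the energy alone dominates the Hardy term on
every arc. The arcs with `r ≥ R` can therefore be discarded, and on `U_R` the bound is the
definition of `λ(R, θ')` as an infimum, which is bounded below for the same reason.
-/

open scoped Topology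

/-! ### Calculus and topology -/

lemma integrable_of_support_subset_tsupport {X E M : Type*} [TopologicalSpace X]
    [MeasurableSpace X] [OpensMeasurableSpace X] {μ : Measure X} [IsFiniteMeasureOnCompacts μ]
    [NormedAddCommGroup E] [Zero M] {ψ : X → M} {F : X → E} {U : Set X} (hU : IsOpen U)
    (hψ : HasCompactSupport ψ) (hψU : tsupport ψ ⊆ U) (hF : ContinuousOn F U)
    (hsupp : Function.support F ⊆ tsupport ψ) : Integrable F μ := by
  have hFψ : tsupport F ⊆ tsupport ψ := closure_minimal hsupp (isClosed_tsupport ψ)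
  exact (hF.continuous_of_tsupport_subset hU (hFψ.trans hψU)).integrable_of_hasCompactSupport
    (hψ.mono' hsupp)

lemma isCompact_inter_preimage_of_isOpenMap_domRestrict {X Y : Type*} [TopologicalSpace X]
    [TopologicalSpace Y] {f : X → Y} {U : Set X} {K : Set Y} (hf : IsOpenMap (U.domRestrict f))
    (hinj : InjOn f U) (hK : IsCompact K) (hKU : K ⊆ f '' U) : IsCompact (U ∩ f ⁻¹' K) := by
  rcases isEmpty_or_nonempty X with _ | _
  · exact (Set.toFinite _).isCompact
  have hleft : LeftInvOn (Function.invFunOn f U) f U := hinj.leftInvOn_invFunOn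
  have himage : f '' (U ∩ f ⁻¹' K) = K := by
    rw [image_inter_preimage, inter_eq_self_of_subset_right hKU]
  rw [← hleft.image_image' inter_subset_left, himage]
  exact hK.image_of_continuousOn ((hf.continuousOn_image_of_leftInvOn hleft).mono hKU)

lemma isOpenMap_domRestrict_of_det_ne_zero {𝕜 E : Type*} [NontriviallyNormedField 𝕜]
    [CompleteSpace 𝕜] [NormedAddCommGroup E] [NormedSpace 𝕜 E] [FiniteDimensional 𝕜 E]
    {f : E → E} {f' : E → E →L[𝕜] E} {U : Set E} (hU : IsOpen U)
    (hf : ∀ x ∈ U, HasStrictFDerivAt f (f' x) x) (hdet : ∀ x ∈ U, (f' x).det ≠ 0) :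
    IsOpenMap (U.domRestrict f) := by
  have := FiniteDimensional.complete 𝕜 E
  refine isOpenMap_iff_nhds_le.2 fun x => ?_
  have hequiv : HasStrictFDerivAt f
      ((f' x).toContinuousLinearEquivOfDetNeZero (hdet x x.2) : E →L[𝕜] E) (x : E) := by
    simpa using hf x x.2
  rw [domRestrict_eq, ← Filter.map_map, hU.isOpenEmbedding_subtypeVal.map_nhds_eq,
    hequiv.map_nhds_eq_of_equiv]
  rfl

lemma contDiffAt_one_of_hasDerivAt {𝕜 F : Type*} [NontriviallyNormedField 𝕜]
    [NormedAddCommGroup F] [NormedSpace 𝕜 F] {f f' : 𝕜 → F} {s : Set 𝕜} {x : 𝕜} (hs : s ∈ 𝓝 x)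
    (hf : ∀ y ∈ s, HasDerivAt f (f' y) y) (hf' : ContinuousOn f' s) : ContDiffAt 𝕜 1 f x :=
  contDiffAt_one_iff.2 ⟨fun y => ContinuousLinearMap.toSpanSingleton 𝕜 (f' y), s, hs,
    (ContinuousLinearMap.toSpanSingletonCLE (𝕜 := 𝕜) (E := F)).continuous.comp_continuousOn hf',
    fun y hy => (hf y hy).hasFDerivAt⟩

lemma sq_apply_rotated_basis_add_sq (f : ℝ × ℝ →L[ℝ] ℝ) (α : ℝ) :
    f (cos α, sin α) ^ 2 + f (-sin α, cos α) ^ 2 = f (1, 0) ^ 2 + f (0, 1) ^ 2 := by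
  have hf (x y : ℝ) : f (x, y) = x * f (1, 0) + y * f (0, 1) := by
    rw [← smul_eq_mul, ← smul_eq_mul, ← map_smul, ← map_smul, ← map_add]
    simp
  rw [hf (cos α), hf (-sin α)]
  linear_combination (f (1, 0) ^ 2 + f (0, 1) ^ 2) * sin_sq_add_cos_sq α

/-! ### A one-dimensional Dirichlet eigenvalue bound -/

lemma hasDerivAt_mul_sq_of_tsupport_subset {w w' f : ℝ → ℝ} {s : Set ℝ}
    (hw : ∀ x ∈ s, HasDerivAt w (w' x) x) (hf : Differentiable ℝ f) (hfs : tsupport f ⊆ s)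
    (x : ℝ) :
    HasDerivAt (fun y => w y * f y ^ 2) (w' x * f x ^ 2 + w x * (2 * f x * deriv f x)) x := by
  by_cases hx : x ∈ tsupport f
  · refine ((hw x (hfs hx)).mul ((hf x).hasDerivAt.pow 2)).congr_deriv ?_
    simp
  · have hzero : (fun y => w y * f y ^ 2) =ᶠ[𝓝 x] fun _ => 0 := by
      filter_upwards [notMem_tsupport_iff_eventuallyEq.1 hx] with y hy
      simp [hy]
    simpa [image_eq_zero_of_notMem_tsupport hx] using
      (hasDerivAt_const x (0 : ℝ)).congr_of_eventuallyEq hzero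

lemma setIntegral_deriv_sq_add_riccati_nonneg {w w' f : ℝ → ℝ} {s : Set ℝ} (hs : IsOpen s)
    (hw : ∀ x ∈ s, HasDerivAt w (w' x) x) (hw' : ContinuousOn w' s) (hf : ContDiff ℝ 1 f)
    (hfc : HasCompactSupport f) (hfs : tsupport f ⊆ s) :
    0 ≤ ∫ x in s, (deriv f x ^ 2 + (w' x + w x ^ 2) * f x ^ 2) := by
  have hwc : ContinuousOn w s := fun x hx => (hw x hx).continuousAt.continuousWithinAt
  have : Continuous f := hf.continuous
  have : Continuous (deriv f) := hf.continuous_deriv le_rfl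
  have integrable {F : ℝ → ℝ} (hF : ContinuousOn F s)
      (hF0 : ∀ x, f x = 0 → deriv f x = 0 → F x = 0) : Integrable F := by
    refine integrable_of_support_subset_tsupport hs hfc hfs hF fun x hx => ?_
    by_contra hxf
    exact hx (hF0 x (image_eq_zero_of_notMem_tsupport hxf)
      (image_eq_zero_of_notMem_tsupport fun h => hxf (tsupport_deriv_subset h)))
  have hI : Integrable fun x => deriv f x ^ 2 + (w' x + w x ^ 2) * f x ^ 2 :=
    integrable (by fun_prop) (by simp +contextual)
  have hI' : Integrable fun x => w' x * f x ^ 2 + w x * (2 * f x * deriv f x) :=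
    integrable (by fun_prop) (by simp +contextual)
  have hzero : ∫ x, (w' x * f x ^ 2 + w x * (2 * f x * deriv f x)) = 0 :=
    integral_eq_zero_of_hasDerivAt_of_integrable
      (hasDerivAt_mul_sq_of_tsupport_subset hw (hf.differentiable one_ne_zero) hfs) hI'
      (integrable (by fun_prop) (by simp +contextual))
  have hvanish (x : ℝ) (hx : x ∉ s) : deriv f x ^ 2 + (w' x + w x ^ 2) * f x ^ 2 = 0 := by
    have hxf : x ∉ tsupport f := fun h => hx (hfs h)
    simp [image_eq_zero_of_notMem_tsupport hxf,
      image_eq_zero_of_notMem_tsupport fun h => hxf (tsupport_deriv_subset h)]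
  rw [setIntegral_eq_integral_of_forall_compl_eq_zero hvanish, ← hzero]
  -- The difference of the two integrands is the square `(f' - w f)²`.
  exact integral_mono hI' hI fun x => by nlinarith [sq_nonneg (deriv f x - w x * f x)]

lemma setIntegral_deriv_sq_sub_sq_pi_div_mul_sq_nonneg {α β : ℝ} {f : ℝ → ℝ}
    (hf : ContDiff ℝ 1 f) (hfs : tsupport f ⊆ Ioo α β) :
    0 ≤ ∫ x in Ioo α β, (deriv f x ^ 2 - (π / (β - α)) ^ 2 * f x ^ 2) := by
  set k : ℝ := π / (β - α)
  have hsin (x : ℝ) (hx : x ∈ Ioo α β) : sin (k * (x - α)) ≠ 0 := by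
    have hαβ : 0 < β - α := sub_pos.2 (hx.1.trans hx.2)
    have hkpos : 0 < k := div_pos pi_pos hαβ
    refine (sin_pos_of_pos_of_lt_pi (mul_pos hkpos (sub_pos.2 hx.1)) ?_).ne'
    calc k * (x - α) < k * (β - α) := by gcongr; exact hx.2
      _ = π := div_mul_cancel₀ π hαβ.ne'
  have hfc : HasCompactSupport f :=
    isCompact_Icc.of_isClosed_subset (isClosed_tsupport f) (hfs.trans Ioo_subset_Icc_self)
  -- `w = k cot (k (x - α))` solves the Riccati equation `w' + w² = -k²`.
  have hw (x : ℝ) (hx : x ∈ Ioo α β) :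
      HasDerivAt (fun y => k * (cos (k * (y - α)) / sin (k * (y - α))))
        (-k ^ 2 / sin (k * (x - α)) ^ 2) x := by
    have harg : HasDerivAt (fun y => k * (y - α)) k x := by
      simpa using ((hasDerivAt_id x).sub_const α).const_mul k
    refine ((harg.cos.div harg.sin (hsin x hx)).const_mul k).congr_deriv ?_
    field_simp [hsin x hx]
    linear_combination (-k ^ 2) * sin_sq_add_cos_sq (k * (x - α))
  have hw' : ContinuousOn (fun x => -k ^ 2 / sin (k * (x - α)) ^ 2) (Ioo α β) :=
    continuousOn_const.div (by fun_prop) fun x hx => pow_ne_zero 2 (hsin x hx)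
  have hriccati : ∫ x in Ioo α β, (deriv f x ^ 2 + (-k ^ 2 / sin (k * (x - α)) ^ 2
        + (k * (cos (k * (x - α)) / sin (k * (x - α)))) ^ 2) * f x ^ 2)
      = ∫ x in Ioo α β, (deriv f x ^ 2 - k ^ 2 * f x ^ 2) := by
    refine setIntegral_congr_fun measurableSet_Ioo fun x hx => ?_
    have := hsin x hx
    field_simp
    linear_combination (k ^ 2 * f x ^ 2) * sin_sq_add_cos_sq (k * (x - α))
  rw [← hriccati]
  exact setIntegral_deriv_sq_add_riccati_nonneg isOpen_Ioo hw hw' hf hfc hfs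

/-! ### The coordinate map -/

lemma isOpen_wedgeU (a : ℝ) : IsOpen (wedgeU a) := isOpen_Ioi.prod isOpen_Ioo

lemma isOpen_wedgeUR (a R : ℝ) : IsOpen (wedgeUR a R) := isOpen_Ioo.prod isOpen_Ioo

lemma wedgeUR_subset_wedgeU (a R : ℝ) : wedgeUR a R ⊆ wedgeU a :=
  prod_mono Ioo_subset_Ioi_self subset_rfl

lemma enorm2_wedgeMap (θ : ℝ → ℝ) (p : ℝ × ℝ) : enorm2 (wedgeMap θ p) = |p.1| := by
  rw [enorm2, ← sqrt_sq_eq_abs]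
  congr 1
  simp only [wedgeMap]
  linear_combination p.1 ^ 2 * sin_sq_add_cos_sq (p.2 + θ p.1)

lemma injOn_wedgeMap {a : ℝ} (ha : a ≤ 1) (θ : ℝ → ℝ) : InjOn (wedgeMap θ) (wedgeU a) := by
  rintro ⟨r, φ⟩ ⟨hr : 0 < r, hφ⟩ ⟨s, χ⟩ ⟨hs : 0 < s, hχ⟩ h
  obtain rfl : r = s := by
    simpa only [enorm2_wedgeMap, abs_of_pos hr, abs_of_pos hs] using congrArg enorm2 h
  simp only [wedgeMap, Prod.mk.injEq, mul_right_inj' hr.ne'] at h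
  have hcos : cos (φ - χ) = 1 := by
    rw [← add_sub_add_right_eq_sub φ χ (θ r), cos_sub, h.1, h.2]
    linear_combination sin_sq_add_cos_sq (χ + θ r)
  have hwidth : 2 * π * a ≤ 2 * π := mul_le_of_le_one_right two_pi_pos.le ha
  have hφχ : φ - χ = 0 :=
    (cos_eq_one_iff_of_lt_of_lt (by linarith [hφ.1, hχ.2]) (by linarith [hφ.2, hχ.1])).1 hcos
  rw [sub_eq_zero.1 hφχ]

/-- The derivative of `wedgeMap θ` at `p`, provided that `θ' p.1` is the derivative of `θ` at `p.1`:
the derivative of the shear `(r, φ) ↦ (r, φ + θ r)` followed by that of polar coordinates. -/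
def wedgeMapFDeriv (θ θ' : ℝ → ℝ) (p : ℝ × ℝ) : ℝ × ℝ →L[ℝ] ℝ × ℝ :=
  (fderivPolarCoordSymm (p.1, p.2 + θ p.1)).comp
    (Matrix.toLin (.finTwoProd ℝ) (.finTwoProd ℝ) !![1, 0; θ' p.1, 1]).toContinuousLinearMap

lemma hasFDerivAt_wedgeMap {θ θ' : ℝ → ℝ} {p : ℝ × ℝ} (hθ : HasDerivAt θ (θ' p.1) p.1) :
    HasFDerivAt (wedgeMap θ) (wedgeMapFDeriv θ θ' p) p := by
  have hshear : HasFDerivAt (fun q : ℝ × ℝ => (q.1, q.2 + θ q.1))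
      (Matrix.toLin (.finTwoProd ℝ) (.finTwoProd ℝ)
        !![1, 0; θ' p.1, 1]).toContinuousLinearMap p := by
    rw [Matrix.toLin_finTwoProd_toContinuousLinearMap]
    refine (hasFDerivAt_fst.prodMk
      (hasFDerivAt_snd.add (hθ.comp_hasFDerivAt p hasFDerivAt_fst))).congr_fderiv ?_
    ext <;> simp
  exact (hasFDerivAt_polarCoord_symm (p.1, p.2 + θ p.1)).comp p hshear

lemma det_wedgeMapFDeriv (θ θ' : ℝ → ℝ) (p : ℝ × ℝ) : (wedgeMapFDeriv θ θ' p).det = p.1 := by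
  have hpolar := det_fderivPolarCoordSymm (p.1, p.2 + θ p.1)
  rw [ContinuousLinearMap.det] at hpolar ⊢
  rw [wedgeMapFDeriv, ContinuousLinearMap.toLinearMap_comp, LinearMap.det_comp, hpolar]
  simp

lemma wedgeMapFDeriv_apply_radial (θ θ' : ℝ → ℝ) (p : ℝ × ℝ) :
    wedgeMapFDeriv θ θ' p (1, -θ' p.1) = (cos (p.2 + θ p.1), sin (p.2 + θ p.1)) := by
  simp [wedgeMapFDeriv, fderivPolarCoordSymm, Matrix.toLin_finTwoProd_toContinuousLinearMap]

lemma wedgeMapFDeriv_apply_angular (θ θ' : ℝ → ℝ) (p : ℝ × ℝ) :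
    wedgeMapFDeriv θ θ' p (0, 1) = p.1 • (-sin (p.2 + θ p.1), cos (p.2 + θ p.1)) := by
  simp [wedgeMapFDeriv, fderivPolarCoordSymm, Matrix.toLin_finTwoProd_toContinuousLinearMap]

lemma contDiffAt_wedgeMap {n : WithTop ℕ∞} {θ : ℝ → ℝ} {p : ℝ × ℝ} (hθ : ContDiffAt ℝ n θ p.1) :
    ContDiffAt ℝ n (wedgeMap θ) p := by
  have hangle : ContDiffAt ℝ n (fun q : ℝ × ℝ => q.2 + θ q.1) p :=
    contDiffAt_snd.add (hθ.comp p contDiffAt_fst)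
  exact (contDiffAt_fst.mul hangle.cos).prodMk (contDiffAt_fst.mul hangle.sin)

lemma contDiffAt_wedgeMap_of_mem_wedgeU {a : ℝ} {θ θ' : ℝ → ℝ}
    (hθ : ∀ r ∈ Ioi (0 : ℝ), HasDerivAt θ (θ' r) r) (hθ' : ContinuousOn θ' (Ioi 0)) {p : ℝ × ℝ}
    (hp : p ∈ wedgeU a) : ContDiffAt ℝ 1 (wedgeMap θ) p :=
  contDiffAt_wedgeMap (contDiffAt_one_of_hasDerivAt (Ioi_mem_nhds hp.1) hθ hθ')

lemma isCompact_wedgeU_inter_preimage_wedgeMap {a : ℝ} (ha : a ≤ 1) {θ θ' : ℝ → ℝ}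
    (hθ : ∀ r ∈ Ioi (0 : ℝ), HasDerivAt θ (θ' r) r) (hθ' : ContinuousOn θ' (Ioi 0))
    {K : Set (ℝ × ℝ)} (hK : IsCompact K) (hKU : K ⊆ wedgeMap θ '' wedgeU a) :
    IsCompact (wedgeU a ∩ wedgeMap θ ⁻¹' K) := by
  refine isCompact_inter_preimage_of_isOpenMap_domRestrict
    (isOpenMap_domRestrict_of_det_ne_zero (f' := wedgeMapFDeriv θ θ') (isOpen_wedgeU a)
      (fun p hp => ?_) fun p hp => ?_) (injOn_wedgeMap ha θ) hK hKU
  · exact (contDiffAt_wedgeMap_of_mem_wedgeU hθ hθ' hp).hasStrictFDerivAt'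
      (hasFDerivAt_wedgeMap (hθ p.1 hp.1)) one_ne_zero
  · rw [det_wedgeMapFDeriv]
    exact hp.1.ne'

lemma setIntegral_image_wedgeMap {a : ℝ} (ha : a ≤ 1) {θ θ' : ℝ → ℝ}
    (hθ : ∀ r ∈ Ioi (0 : ℝ), HasDerivAt θ (θ' r) r) {F : Type*} [NormedAddCommGroup F]
    [NormedSpace ℝ F] {s : Set (ℝ × ℝ)} (hs : MeasurableSet s) (hsU : s ⊆ wedgeU a)
    (g : ℝ × ℝ → F) :
    ∫ x in wedgeMap θ '' s, g x = ∫ p in s, p.1 • g (wedgeMap θ p) := by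
  rw [integral_image_eq_integral_abs_det_fderiv_smul volume hs
    (fun p hp => (hasFDerivAt_wedgeMap (hθ p.1 (hsU hp).1)).hasFDerivWithinAt)
    ((injOn_wedgeMap ha θ).mono hsU)]
  refine setIntegral_congr_fun hs fun p hp => ?_
  have hp0 : 0 < p.1 := (hsU hp).1
  simp only [det_wedgeMapFDeriv, abs_of_pos hp0]

/-! ### Hardy densities -/

/-- The integrand `|∇u|² - (1/(4a²)) |u|²/|x|²` of the Hardy functional in Cartesian coordinates. -/
def hardyDensity (a : ℝ) (u : ℝ × ℝ → ℝ) (x : ℝ × ℝ) : ℝ :=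
  fderiv ℝ u x (1, 0) ^ 2 + fderiv ℝ u x (0, 1) ^ 2 - (1 / (4 * a ^ 2)) * (u x ^ 2 / enorm2 x ^ 2)

/-- The integrand of the Hardy functional in the coordinates `(r, φ)`, including the Jacobian `r`;
it is the integrand in the numerator of `lamRayleigh`. -/
def wedgeHardyDensity (a : ℝ) (θ' : ℝ → ℝ) (ψ : ℝ × ℝ → ℝ) (p : ℝ × ℝ) : ℝ :=
  ((fderiv ℝ ψ p (1, 0) - θ' p.1 * fderiv ℝ ψ p (0, 1)) ^ 2 + (fderiv ℝ ψ p (0, 1)) ^ 2 / p.1 ^ 2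
    - (1 / (4 * a ^ 2)) * (ψ p) ^ 2 / p.1 ^ 2) * p.1

/-- The test functions of `lamRayleigh`: the space `C¹_c(U)`, without the condition of not vanishing
identically on `U_R`. -/
structure IsWedgeTestFunction (a : ℝ) (ψ : ℝ × ℝ → ℝ) : Prop where
  contDiff : ContDiff ℝ 1 ψ
  hasCompactSupport : HasCompactSupport ψ
  tsupport_subset : tsupport ψ ⊆ wedgeU a

lemma wedgeHardyDensity_comp_wedgeMap (a : ℝ) {θ θ' : ℝ → ℝ} {u : ℝ × ℝ → ℝ} {p : ℝ × ℝ}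
    (hp : p.1 ≠ 0) (hθ : HasDerivAt θ (θ' p.1) p.1) (hu : DifferentiableAt ℝ u (wedgeMap θ p)) :
    wedgeHardyDensity a θ' (u ∘ wedgeMap θ) p = p.1 * hardyDensity a u (wedgeMap θ p) := by
  set D := fderiv ℝ u (wedgeMap θ p)
  set ω := p.2 + θ p.1
  have hfderiv : fderiv ℝ (u ∘ wedgeMap θ) p = D.comp (wedgeMapFDeriv θ θ' p) :=
    (hu.hasFDerivAt.comp p (hasFDerivAt_wedgeMap hθ)).fderiv
  have hradial : fderiv ℝ (u ∘ wedgeMap θ) p (1, 0) - θ' p.1 * fderiv ℝ (u ∘ wedgeMap θ) p (0, 1)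
      = D (cos ω, sin ω) := by
    rw [← smul_eq_mul, ← map_smul, ← map_sub, hfderiv, ContinuousLinearMap.comp_apply,
      ← wedgeMapFDeriv_apply_radial θ θ' p]
    simp
  have hangular : fderiv ℝ (u ∘ wedgeMap θ) p (0, 1) = p.1 * D (-sin ω, cos ω) := by
    rw [hfderiv, ContinuousLinearMap.comp_apply, wedgeMapFDeriv_apply_angular, map_smul,
      smul_eq_mul]
  rw [wedgeHardyDensity, hradial, hangular, hardyDensity, enorm2_wedgeMap, sq_abs,
    ← sq_apply_rotated_basis_add_sq D ω, Function.comp_apply]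
  field_simp

lemma wedgeHardyDensity_congr {a : ℝ} {θ' : ℝ → ℝ} {ψ χ : ℝ × ℝ → ℝ} {p : ℝ × ℝ}
    (h : ψ =ᶠ[𝓝 p] χ) : wedgeHardyDensity a θ' ψ p = wedgeHardyDensity a θ' χ p := by
  rw [wedgeHardyDensity, wedgeHardyDensity, h.fderiv_eq, h.eq_of_nhds]

lemma inv_mul_angular_le_wedgeHardyDensity (a : ℝ) (θ' : ℝ → ℝ) (ψ : ℝ × ℝ → ℝ) {p : ℝ × ℝ}
    (hp : 0 < p.1) :
    p.1⁻¹ * (fderiv ℝ ψ p (0, 1) ^ 2 - (1 / (4 * a ^ 2)) * ψ p ^ 2) ≤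
      wedgeHardyDensity a θ' ψ p := by
  have hsplit : wedgeHardyDensity a θ' ψ p =
      (fderiv ℝ ψ p (1, 0) - θ' p.1 * fderiv ℝ ψ p (0, 1)) ^ 2 * p.1
        + p.1⁻¹ * (fderiv ℝ ψ p (0, 1) ^ 2 - (1 / (4 * a ^ 2)) * ψ p ^ 2) := by
    rw [wedgeHardyDensity]
    field_simp
    ring
  rw [hsplit]
  exact le_add_of_nonneg_left (by positivity)

lemma setIntegral_hardyDensity {a : ℝ} {u : ℝ × ℝ → ℝ} (hu : ContDiff ℝ 1 u)
    (huc : HasCompactSupport u) (hu0 : ∀ x ∈ tsupport u, enorm2 x ≠ 0) (s : Set (ℝ × ℝ)) :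
    ∫ x in s, hardyDensity a u x =
      (∫ x in s, (fderiv ℝ u x (1, 0) ^ 2 + fderiv ℝ u x (0, 1) ^ 2))
        - (1 / (4 * a ^ 2)) * ∫ x in s, u x ^ 2 / enorm2 x ^ 2 := by
  have : Continuous (fderiv ℝ u) := hu.continuous_fderiv one_ne_zero
  have henorm : Continuous enorm2 := by unfold enorm2; fun_prop
  have hgrad : Integrable fun x => fderiv ℝ u x (1, 0) ^ 2 + fderiv ℝ u x (0, 1) ^ 2 := by
    refine integrable_of_support_subset_tsupport isOpen_univ huc (subset_univ _)
      (by fun_prop) fun x hx => tsupport_fderiv_subset ℝ (subset_tsupport _ fun h => hx ?_)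
    simp [h]
  have hhardy : Integrable fun x => u x ^ 2 / enorm2 x ^ 2 := by
    refine integrable_of_support_subset_tsupport (isOpen_ne_fun henorm continuous_const) huc hu0
      ((hu.continuous.pow 2).continuousOn.div (henorm.pow 2).continuousOn
        fun x hx => pow_ne_zero 2 hx) fun x hx => subset_tsupport _ fun h => hx ?_
    simp [h]
  rw [← integral_const_mul, ← integral_sub hgrad.integrableOn (hhardy.const_mul _).integrableOn]
  rfl

namespace IsWedgeTestFunction

variable {a : ℝ} {θ' : ℝ → ℝ} {ψ : ℝ × ℝ → ℝ}

lemma integrable_wedgeHardyDensity (hψ : IsWedgeTestFunction a ψ)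
    (hθ' : ContinuousOn θ' (Ioi 0)) : Integrable (wedgeHardyDensity a θ' ψ) := by
  have hψ0 : Continuous ψ := hψ.contDiff.continuous
  have : Continuous (fderiv ℝ ψ) := hψ.contDiff.continuous_fderiv one_ne_zero
  have hψ1 : Continuous fun p => fderiv ℝ ψ p (1, 0) := by fun_prop
  have hψ2 : Continuous fun p => fderiv ℝ ψ p (0, 1) := by fun_prop
  have hθ'U : ContinuousOn (fun p : ℝ × ℝ => θ' p.1) (wedgeU a) :=
    hθ'.comp continuousOn_fst fun p hp => hp.1
  have hr : ∀ p ∈ wedgeU a, p.1 ^ 2 ≠ 0 := fun p hp => pow_ne_zero 2 hp.1.ne'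
  refine integrable_of_support_subset_tsupport (isOpen_wedgeU a) hψ.hasCompactSupport
    hψ.tsupport_subset ?_ fun p hp => ?_
  · have hgrad := ((hψ1.continuousOn.sub (hθ'U.mul hψ2.continuousOn)).pow 2).add
      ((hψ2.continuousOn.pow 2).div (continuousOn_fst.pow 2) hr)
    have hhardy := ((hψ0.continuousOn.pow 2).const_mul (1 / (4 * a ^ 2))).div
      (continuousOn_fst.pow 2) hr
    exact (hgrad.sub hhardy).mul continuousOn_fst
  · by_contra hpψ
    have hfderiv : fderiv ℝ ψ p = 0 :=
      image_eq_zero_of_notMem_tsupport fun h => hpψ (tsupport_fderiv_subset ℝ h)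
    exact hp (by simp [wedgeHardyDensity, hfderiv, image_eq_zero_of_notMem_tsupport hpψ])

lemma integrable_sq_mul_fst (hψ : IsWedgeTestFunction a ψ) :
    Integrable fun p => ψ p ^ 2 * p.1 := by
  refine integrable_of_support_subset_tsupport isOpen_univ hψ.hasCompactSupport (subset_univ _)
    (by have := hψ.contDiff.continuous; fun_prop) fun p hp => subset_tsupport _ fun h => hp ?_
  simp [h]

lemma setIntegral_wedgeHardyDensity_arc_nonneg (hψ : IsWedgeTestFunction a ψ) {r : ℝ}
    (hr : 0 < r) : 0 ≤ ∫ φ in Ioo 0 (2 * π * a), wedgeHardyDensity a θ' ψ (r, φ) := by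
  set f : ℝ → ℝ := fun φ => ψ (r, φ)
  have hf : ContDiff ℝ 1 f := hψ.contDiff.comp (contDiff_const.prodMk contDiff_id)
  have hfs : tsupport f ⊆ Ioo 0 (2 * π * a) := fun φ hφ =>
    (hψ.tsupport_subset (tsupport_comp_subset_preimage ψ (f := fun φ : ℝ => (r, φ))
      (by fun_prop) hφ)).2
  have hderiv (φ : ℝ) : deriv f φ = fderiv ℝ ψ (r, φ) (0, 1) :=
    ((hψ.contDiff.differentiable one_ne_zero (r, φ)).hasFDerivAt.comp_hasDerivAt φ
      ((hasDerivAt_const φ r).prodMk (hasDerivAt_id φ))).deriv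
  have : Continuous f := hf.continuous
  have : Continuous (deriv f) := hf.continuous_deriv le_rfl
  have hint {g : ℝ → ℝ} (hg : Continuous g) : IntegrableOn g (Ioo 0 (2 * π * a)) :=
    hg.integrableOn_Icc.mono_set Ioo_subset_Icc_self
  have harc : 0 ≤ ∫ φ in Ioo 0 (2 * π * a), (deriv f φ ^ 2 - (1 / (4 * a ^ 2)) * f φ ^ 2) := by
    have heigenvalue : (π / (2 * π * a - 0)) ^ 2 = 1 / (4 * a ^ 2) := by
      rw [sub_zero, mul_right_comm, div_mul_cancel_right₀ pi_ne_zero, inv_pow, one_div]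
      ring
    rw [← heigenvalue]
    exact setIntegral_deriv_sq_sub_sq_pi_div_mul_sq_nonneg hf hfs
  have hdensity : Continuous fun φ => wedgeHardyDensity a θ' ψ (r, φ) := by
    have : Continuous ψ := hψ.contDiff.continuous
    have : Continuous (fderiv ℝ ψ) := hψ.contDiff.continuous_fderiv one_ne_zero
    simp only [wedgeHardyDensity]
    fun_prop (disch := positivity)
  calc 0 ≤ r⁻¹ * ∫ φ in Ioo 0 (2 * π * a), (deriv f φ ^ 2 - (1 / (4 * a ^ 2)) * f φ ^ 2) := by
        positivity
    _ = ∫ φ in Ioo 0 (2 * π * a), r⁻¹ * (deriv f φ ^ 2 - (1 / (4 * a ^ 2)) * f φ ^ 2) :=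
        (integral_const_mul _ _).symm
    _ ≤ ∫ φ in Ioo 0 (2 * π * a), wedgeHardyDensity a θ' ψ (r, φ) := by
        refine setIntegral_mono (hint (by fun_prop)) (hint hdensity) fun φ => ?_
        simpa only [hderiv] using inv_mul_angular_le_wedgeHardyDensity a θ' ψ (p := (r, φ)) hr

lemma setIntegral_wedgeHardyDensity_nonneg (hψ : IsWedgeTestFunction a ψ)
    (hθ' : ContinuousOn θ' (Ioi 0)) {A : Set ℝ} (hA : MeasurableSet A) (hA0 : A ⊆ Ioi 0) :
    0 ≤ ∫ p in A ×ˢ Ioo 0 (2 * π * a), wedgeHardyDensity a θ' ψ p := by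
  rw [Measure.volume_eq_prod,
    setIntegral_prod _ (hψ.integrable_wedgeHardyDensity hθ').integrableOn]
  exact setIntegral_nonneg hA fun r hr => hψ.setIntegral_wedgeHardyDensity_arc_nonneg (hA0 hr)

lemma setIntegral_wedgeUR_wedgeHardyDensity_le (hψ : IsWedgeTestFunction a ψ)
    (hθ' : ContinuousOn θ' (Ioi 0)) (R : ℝ) :
    ∫ p in wedgeUR a R, wedgeHardyDensity a θ' ψ p ≤
      ∫ p in wedgeU a, wedgeHardyDensity a θ' ψ p := by
  have hint := hψ.integrable_wedgeHardyDensity hθ'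
  have houter : MeasurableSet (Ioi (0 : ℝ) \ Ioo 0 R) := measurableSet_Ioi.diff measurableSet_Ioo
  have hU : wedgeU a = wedgeUR a R ∪ (Ioi 0 \ Ioo 0 R) ×ˢ Ioo 0 (2 * π * a) := by
    rw [wedgeU, wedgeUR, ← union_prod, union_sdiff_cancel Ioo_subset_Ioi_self]
  have hdisj : Disjoint (wedgeUR a R) ((Ioi 0 \ Ioo 0 R) ×ˢ Ioo 0 (2 * π * a)) :=
    disjoint_sdiff_right.set_prod_left _ _
  rw [hU, setIntegral_union hdisj (houter.prod measurableSet_Ioo) hint.integrableOn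
    hint.integrableOn]
  exact le_add_of_nonneg_right
    (hψ.setIntegral_wedgeHardyDensity_nonneg hθ' houter sdiff_subset)

lemma setIntegral_wedgeUR_sq_mul_fst_pos (hψ : IsWedgeTestFunction a ψ) {R : ℝ}
    (hne : ¬∀ p ∈ wedgeUR a R, ψ p = 0) : 0 < ∫ p in wedgeUR a R, ψ p ^ 2 * p.1 := by
  have hnonneg : ∀ᵐ p ∂volume.restrict (wedgeUR a R), 0 ≤ ψ p ^ 2 * p.1 :=
    ae_restrict_of_forall_mem (isOpen_wedgeUR a R).measurableSet fun p hp =>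
      mul_nonneg (sq_nonneg _) hp.1.1.le
  rw [setIntegral_pos_iff_support_of_nonneg_ae hnonneg hψ.integrable_sq_mul_fst.integrableOn]
  push Not at hne
  obtain ⟨p, hp, hψp⟩ := hne
  have hopen : IsOpen (Function.support (fun p => ψ p ^ 2 * p.1) ∩ wedgeUR a R) :=
    ((hψ.contDiff.continuous.pow 2).mul continuous_fst).isOpen_support.inter (isOpen_wedgeUR a R)
  exact hopen.measure_pos _ ⟨p, mul_ne_zero (pow_ne_zero 2 hψp) hp.1.1.ne', hp⟩

lemma lamRayleigh_le_div (hψ : IsWedgeTestFunction a ψ) (hθ' : ContinuousOn θ' (Ioi 0)) {R : ℝ}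
    (hne : ¬∀ p ∈ wedgeUR a R, ψ p = 0) :
    lamRayleigh a R θ' ≤ (∫ p in wedgeUR a R, wedgeHardyDensity a θ' ψ p)
      / ∫ p in wedgeUR a R, ψ p ^ 2 * p.1 := by
  refine csInf_le ⟨0, ?_⟩
    ⟨ψ, hψ.contDiff, hψ.hasCompactSupport, hψ.tsupport_subset, hne, rfl⟩
  rintro _ ⟨χ, hχ, hχc, hχs, hχne, rfl⟩
  have hχtest : IsWedgeTestFunction a χ := ⟨hχ, hχc, hχs⟩
  exact div_nonneg
    (hχtest.setIntegral_wedgeHardyDensity_nonneg hθ' measurableSet_Ioo Ioo_subset_Ioi_self)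
    (hχtest.setIntegral_wedgeUR_sq_mul_fst_pos hχne).le

lemma lamRayleigh_mul_le (hψ : IsWedgeTestFunction a ψ) (hθ' : ContinuousOn θ' (Ioi 0)) (R : ℝ) :
    lamRayleigh a R θ' * ∫ p in wedgeUR a R, ψ p ^ 2 * p.1 ≤
      ∫ p in wedgeUR a R, wedgeHardyDensity a θ' ψ p := by
  by_cases hne : ∀ p ∈ wedgeUR a R, ψ p = 0
  · have hmass : ∫ p in wedgeUR a R, ψ p ^ 2 * p.1 = 0 :=
      setIntegral_eq_zero_of_forall_eq_zero fun p hp => by simp [hne p hp]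
    rw [hmass, mul_zero]
    exact hψ.setIntegral_wedgeHardyDensity_nonneg hθ' measurableSet_Ioo Ioo_subset_Ioi_self
  · exact (le_div_iff₀ (hψ.setIntegral_wedgeUR_sq_mul_fst_pos hne)).1
      (hψ.lamRayleigh_le_div hθ' hne)

end IsWedgeTestFunction

/-! ### Pulling back to the half-strip -/

/-- The function `u ∘ ℒ` on `U`, extended by zero; this turns functions on `Ω` into test functions
on `U`. -/
def wedgePullback (a : ℝ) (θ : ℝ → ℝ) (u : ℝ × ℝ → ℝ) : ℝ × ℝ → ℝ :=
  (wedgeU a).indicator (u ∘ wedgeMap θ)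

lemma wedgePullback_eventuallyEq {a : ℝ} (θ : ℝ → ℝ) (u : ℝ × ℝ → ℝ) {p : ℝ × ℝ}
    (hp : p ∈ wedgeU a) : wedgePullback a θ u =ᶠ[𝓝 p] u ∘ wedgeMap θ :=
  (eqOn_indicator (f := u ∘ wedgeMap θ)).eventuallyEq_of_mem ((isOpen_wedgeU a).mem_nhds hp)

section Pullback

variable {a : ℝ} {θ θ' : ℝ → ℝ} {u : ℝ × ℝ → ℝ}

lemma isWedgeTestFunction_wedgePullback (ha : a ≤ 1)
    (hθ : ∀ r ∈ Ioi (0 : ℝ), HasDerivAt θ (θ' r) r) (hθ' : ContinuousOn θ' (Ioi 0))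
    (hu : ContDiff ℝ 1 u) (huc : HasCompactSupport u)
    (hus : tsupport u ⊆ wedgeMap θ '' wedgeU a) :
    IsWedgeTestFunction a (wedgePullback a θ u) := by
  have hcompact := isCompact_wedgeU_inter_preimage_wedgeMap ha hθ hθ' huc hus
  have hsupp : tsupport (wedgePullback a θ u) ⊆ wedgeU a ∩ wedgeMap θ ⁻¹' tsupport u := by
    refine closure_minimal ?_ hcompact.isClosed
    rw [wedgePullback, support_indicator]
    exact inter_subset_inter_right _ fun p hp => subset_tsupport u hp
  refine ⟨contMDiff_iff_contDiff.1 (contMDiff_of_tsupport fun p hp => ContDiffAt.contMDiffAt ?_),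
    hcompact.of_isClosed_subset (isClosed_tsupport _) hsupp, hsupp.trans inter_subset_left⟩
  have hpU : p ∈ wedgeU a := (hsupp hp).1
  exact (hu.contDiffAt.comp p (contDiffAt_wedgeMap_of_mem_wedgeU hθ hθ' hpU)).congr_of_eventuallyEq
    (wedgePullback_eventuallyEq θ u hpU)

lemma setIntegral_image_wedgeU_hardyDensity (ha : a ≤ 1)
    (hθ : ∀ r ∈ Ioi (0 : ℝ), HasDerivAt θ (θ' r) r) (hu : Differentiable ℝ u) :
    ∫ x in wedgeMap θ '' wedgeU a, hardyDensity a u x =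
      ∫ p in wedgeU a, wedgeHardyDensity a θ' (wedgePullback a θ u) p := by
  have hmeas : MeasurableSet (wedgeU a) := (isOpen_wedgeU a).measurableSet
  rw [setIntegral_image_wedgeMap ha hθ hmeas subset_rfl]
  refine setIntegral_congr_fun hmeas fun p hp => ?_
  exact ((wedgeHardyDensity_congr (wedgePullback_eventuallyEq θ u hp)).trans
    (wedgeHardyDensity_comp_wedgeMap a hp.1.ne' (hθ p.1 hp.1) (hu _))).symm

lemma setIntegral_image_wedgeUR_sq (ha : a ≤ 1)
    (hθ : ∀ r ∈ Ioi (0 : ℝ), HasDerivAt θ (θ' r) r) (R : ℝ) (u : ℝ × ℝ → ℝ) :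
    ∫ x in wedgeMap θ '' wedgeUR a R, u x ^ 2 =
      ∫ p in wedgeUR a R, wedgePullback a θ u p ^ 2 * p.1 := by
  have hmeas : MeasurableSet (wedgeUR a R) := (isOpen_wedgeUR a R).measurableSet
  rw [setIntegral_image_wedgeMap ha hθ hmeas (wedgeUR_subset_wedgeU a R)]
  refine setIntegral_congr_fun hmeas fun p hp => ?_
  simp [wedgePullback, wedgeUR_subset_wedgeU a R hp, mul_comm]

end Pullback

theorem local_hardy_curved_wedge_general {a : ℝ} (ha : a ≤ 1) {θ θ' : ℝ → ℝ}
    (hθ : ∀ r ∈ Ioi (0 : ℝ), HasDerivAt θ (θ' r) r) (hθ' : ContinuousOn θ' (Ioi 0)) (R : ℝ)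
    {u : ℝ × ℝ → ℝ} (hu : ContDiff ℝ 1 u) (huc : HasCompactSupport u)
    (hus : tsupport u ⊆ wedgeMap θ '' wedgeU a) :
    lamRayleigh a R θ' * ∫ x in wedgeMap θ '' wedgeUR a R, (u x) ^ 2 ≤
      (∫ x in wedgeMap θ '' wedgeU a, ((fderiv ℝ u x (1, 0)) ^ 2 + (fderiv ℝ u x (0, 1)) ^ 2))
        - (1 / (4 * a ^ 2)) * ∫ x in wedgeMap θ '' wedgeU a, (u x) ^ 2 / enorm2 x ^ 2 := by
  set ψ := wedgePullback a θ u
  have hψ : IsWedgeTestFunction a ψ := isWedgeTestFunction_wedgePullback ha hθ hθ' hu huc hus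
  have hu0 : ∀ x ∈ tsupport u, enorm2 x ≠ 0 := fun x hx => by
    obtain ⟨p, hp, rfl⟩ := hus hx
    simpa [enorm2_wedgeMap] using hp.1.ne'
  calc lamRayleigh a R θ' * ∫ x in wedgeMap θ '' wedgeUR a R, (u x) ^ 2
      = lamRayleigh a R θ' * ∫ p in wedgeUR a R, ψ p ^ 2 * p.1 := by
        rw [setIntegral_image_wedgeUR_sq ha hθ]
    _ ≤ ∫ p in wedgeUR a R, wedgeHardyDensity a θ' ψ p := hψ.lamRayleigh_mul_le hθ' R
    _ ≤ ∫ p in wedgeU a, wedgeHardyDensity a θ' ψ p :=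
        hψ.setIntegral_wedgeUR_wedgeHardyDensity_le hθ' R
    _ = ∫ x in wedgeMap θ '' wedgeU a, hardyDensity a u x :=
        (setIntegral_image_wedgeU_hardyDensity ha hθ (hu.differentiable one_ne_zero)).symm
    _ = _ := setIntegral_hardyDensity hu huc hu0 _

/-- **The local Hardy inequality in a curved wedge.**
For `a ∈ (0,1]`, `θ ∈ C¹((0,∞))` with `r θ'(r)` bounded, and `R > 0`, every `C¹` function
`u` compactly supported in the curved wedge `Ω = ℒ(U)` satisfies
`∫_Ω |∇u|² - (1/(4a²)) ∫_Ω u²/|x|² ≥ λ(R,θ') ∫_{Ω_R} u²` with `Ω_R = ℒ(U_R)`. -/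
theorem local_hardy_curved_wedge
    (a : ℝ) (ha : a ∈ Ioc (0:ℝ) 1)
    (θ θ' : ℝ → ℝ)
    (hderiv : ∀ r ∈ Ioi (0:ℝ), HasDerivAt θ (θ' r) r)
    (hcont : ContinuousOn θ' (Ioi 0))
    (C : ℝ) (hC : ∀ r ∈ Ioi (0:ℝ), |r * θ' r| ≤ C)
    (R : ℝ) (hR : 0 < R) :
    ∀ u : ℝ × ℝ → ℝ,
      ContDiff ℝ 1 u → HasCompactSupport u → tsupport u ⊆ wedgeMap θ '' wedgeU a →
      (∫ x in wedgeMap θ '' wedgeU a,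
          ((fderiv ℝ u x (1, 0)) ^ 2 + (fderiv ℝ u x (0, 1)) ^ 2))
          - (1 / (4 * a ^ 2)) * ∫ x in wedgeMap θ '' wedgeU a, (u x) ^ 2 / enorm2 x ^ 2
        ≥ lamRayleigh a R θ' * ∫ x in wedgeMap θ '' wedgeUR a R, (u x) ^ 2 := by
  intro u hu huc hus
  exact local_hardy_curved_wedge_general ha.2 hderiv hcont R hu huc hus
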